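/- Let u be an infinite word over a finite alphabet which is uniformly recurrent and not eventually periodic. Then every nonempty factor w of u has finite index: ind(w) = sup{r ∈ ℚ : w^r is a factor of u} < +∞. -/

import Mathlib

/-!
If `u` is not eventually periodic, then for `p = |w|` some position `n` satisfies
`u (n + p) ≠ u n`. The factor of length `p + 1` at position `n`, which begins and ends with
distinct letters, recurs in every window of some fixed length `R`. A fractional power of `w` has
period `p`, hence cannot contain that factor, so its length is less than `R + p`
(`exists_bound_powPrefix`). The exponents of the powers of `w` in `u` are therefore at most
`(R + p) / p`.
-/

/-- The alphabet of 3iet words. -/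
inductive L3 | A | B | C
deriving DecidableEq, Inhabited

/-- The three-interval exchange transformation `T_{ε,ℓ}`. -/
noncomputable def T3 (ε ℓ : ℝ) (x : ℝ) : ℝ :=
  if x < ℓ - 1 + ε then x + 1 - ε
  else if x < ε then x + 1 - 2*ε
  else x - ε

/-- The 3iet word `u_{ε,ℓ,x0}` coding the orbit of `x0` under `T_{ε,ℓ}`. -/
noncomputable def u3 (ε ℓ x0 : ℝ) (n : ℕ) : L3 :=
  if (T3 ε ℓ)^[n] x0 < ℓ - 1 + ε then L3.A
  else if (T3 ε ℓ)^[n] x0 < ε then L3.B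
  else L3.C

/-- The two-interval exchange transformation `T_ε`. -/
noncomputable def T2 (ε : ℝ) (x : ℝ) : ℝ := if x < ε then x + 1 - ε else x - ε

/-- The Sturmian word `u_{ε,x0}` of slope `ε` coding the orbit of `x0` under `T_ε`
(letter `0` is `false`, letter `1` is `true`). -/
noncomputable def u2 (ε x0 : ℝ) (n : ℕ) : Bool := if (T2 ε)^[n] x0 < ε then false else true

/-- `w` is a factor of the infinite word `u`. -/
def IsFactor {α : Type*} (w : List α) (u : ℕ → α) : Prop :=
  ∃ i : ℕ, w = (List.range w.length).map fun j => u (i + j)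

/-- The prefix of length `m` of the periodic infinite word `www⋯`;
for `|w| ≤ m` this is the fractional power `w^{m/|w|}`. -/
def powPrefix {α : Type*} [Inhabited α] (w : List α) (m : ℕ) : List α :=
  (List.range m).map fun j => w.getD (j % w.length) default

/-- The index of the factor `w` in the infinite word `u`:
`sup {r ∈ ℚ, r ≥ 1, r|w| ∈ ℕ | w^r is a factor of u}`, as an element of `ℝ ∪ {+∞}`. -/
noncomputable def factorIndex {α : Type*} [Inhabited α] (u : ℕ → α) (w : List α) : EReal :=
  sSup {x : EReal | ∃ m : ℕ, w.length ≤ m ∧ IsFactor (powPrefix w m) u ∧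
    x = (((m : ℝ) / (w.length : ℝ) : ℝ) : EReal)}

/-- The index of the infinite word `u`: `sup {ind(w) | w a nonempty factor of u}`. -/
noncomputable def wordIndex {α : Type*} [Inhabited α] (u : ℕ → α) : EReal :=
  sSup {x : EReal | ∃ w : List α, w ≠ [] ∧ IsFactor w u ∧ x = factorIndex u w}

/-- The Gauss map `x ↦ {1/x}`. -/
noncomputable def gaussMap (x : ℝ) : ℝ := Int.fract x⁻¹

/-- `cfa ε n` is the partial quotient `a_{n+1}` of the continued fraction
expansion `ε = [0; a₁, a₂, a₃, …]` of the irrational `ε ∈ (0,1)`. -/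
noncomputable def cfa (ε : ℝ) (n : ℕ) : ℕ := ⌊(gaussMap^[n] ε)⁻¹⌋₊

/-- The morphism `σ01 : A ↦ 0, B ↦ 01, C ↦ 1`. -/
def sigma01 : L3 → List Bool
  | L3.A => [false]
  | L3.B => [false, true]
  | L3.C => [true]

/-- The morphism `σ10 : A ↦ 0, B ↦ 10, C ↦ 1`. -/
def sigma10 : L3 → List Bool
  | L3.A => [false]
  | L3.B => [true, false]
  | L3.C => [true]

/-- The image `φ(u₀)φ(u₁)φ(u₂)⋯` of an infinite word `u` under a (nonerasing) morphism `φ`. -/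
def morphWord (φ : L3 → List Bool) (u : ℕ → L3) (m : ℕ) : Bool :=
  ((List.range (m+1)).flatMap fun k => φ (u k)).getD m false

/-- `u` is a uniformly recurrent infinite word: every factor occurs infinitely often
with bounded gaps (every window of some length `R` contains an occurrence). -/
def UniformlyRecurrent {α : Type*} (u : ℕ → α) : Prop :=
  ∀ w : List α, IsFactor w u → ∃ R : ℕ, ∀ i : ℕ, ∃ j : ℕ, i ≤ j ∧ j < i + R ∧
    w = (List.range w.length).map fun t => u (j + t)

/-- `u` is eventually periodic. -/
def EventuallyPeriodic {α : Type*} (u : ℕ → α) : Prop :=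
  ∃ N p : ℕ, 0 < p ∧ ∀ n : ℕ, N ≤ n → u (n + p) = u n

/-- The standard words of `ε = [0; a₁, a₂, …]`, with the index shifted by one:
`sw ε 0 = s₋₁ = 1`, `sw ε 1 = s₀ = 0`, `sw ε 2 = s₁ = s₀^{a₁-1} s₋₁`, and
`sw ε (n+3) = s_{n+2} = s_{n+1}^{a_{n+2}} s_n`. -/
noncomputable def sw (ε : ℝ) : ℕ → List Bool
  | 0 => [true]
  | 1 => [false]
  | 2 => (List.replicate (cfa ε 0 - 1) ([false] : List Bool)).flatten ++ [true]
  | (n+3) => (List.replicate (cfa ε (n+1)) (sw ε (n+2))).flatten ++ sw ε (n+1)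

/-- Denominators of the convergents of `ε`, shifted by one: `qq ε 0 = q₋₁ = 0`,
`qq ε 1 = q₀ = 1`, and `qq ε (n+2) = q_{n+1} = a_{n+1} q_n + q_{n-1}`. -/
noncomputable def qq (ε : ℝ) : ℕ → ℕ
  | 0 => 0
  | 1 => 1
  | (n+2) => cfa ε n * qq ε (n+1) + qq ε n

/-- `u` is a 3iet word. -/
def Is3ietWord (u : ℕ → L3) : Prop :=
  ∃ ε ℓ x0 : ℝ, Irrational ε ∧ 0 < ε ∧ ε < 1 ∧ max ε (1 - ε) < ℓ ∧ ℓ < 1 ∧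
    x0 ∈ Set.Ico 0 ℓ ∧ u = u3 ε ℓ x0

/-- `v` is a Sturmian word. -/
def IsSturmianWord (v : ℕ → Bool) : Prop :=
  ∃ ε x0 : ℝ, Irrational ε ∧ 0 < ε ∧ ε < 1 ∧ x0 ∈ Set.Ico (0:ℝ) 1 ∧ v = u2 ε x0

/-- The infinite binary word `v1` is amicable with `v2` (`v1 ∝ v2`). -/
def AmicableInf (v1 v2 : ℕ → Bool) : Prop :=
  ∃ w : ℕ → L3, v1 = morphWord sigma01 w ∧ v2 = morphWord sigma10 w

/-- The morphism `Φ_k : A ↦ 0, B ↦ 01^{k+1}, C ↦ 01^k`. -/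
def Phi (k : ℕ) : L3 → List Bool
  | L3.A => [false]
  | L3.B => false :: List.replicate (k+1) true
  | L3.C => false :: List.replicate k true

/-- The infinite word `B₀B₁B₂⋯` obtained by concatenating the sequence of
(nonempty) blocks `B`. -/
def concatOfBlocks (B : ℕ → List Bool) (m : ℕ) : Bool :=
  ((List.range (m+1)).flatMap B).getD m false

/-- An occurrence at `i` of the length-`m` prefix of `www⋯` forces period `|w|` inside the window
`[i, i + m)`. -/
theorem periodic_of_powPrefix {α : Type*} [Inhabited α] {u : ℕ → α} {w : List α} {m i : ℕ}
    (h : powPrefix w m = (List.range (powPrefix w m).length).map fun j => u (i + j))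
    {k : ℕ} (hk : k + w.length < m) : u (i + (k + w.length)) = u (i + k) := by
  have hlen : (powPrefix w m).length = m := by simp [powPrefix]
  rw [hlen] at h
  have key : ∀ j < m, w.getD (j % w.length) default = u (i + j) := by
    intro j hj
    exact List.map_inj_left.mp h j (List.mem_range.mpr hj)
  rw [← key _ hk, ← key k (by omega), Nat.add_mod_right]

/-- The lengths of the powers of `w` occurring in `u` are bounded. -/
theorem exists_bound_powPrefix {α : Type*} [Inhabited α] {u : ℕ → α}
    (hur : UniformlyRecurrent u) (hnp : ¬ EventuallyPeriodic u)
    {w : List α} (hw : w ≠ []) :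
    ∃ M : ℕ, ∀ m : ℕ, IsFactor (powPrefix w m) u → m ≤ M := by
  obtain ⟨n, hn⟩ : ∃ n, u (n + w.length) ≠ u n := by
    by_contra! h
    exact hnp ⟨0, w.length, List.length_pos_iff.mpr hw, fun n _ => h n⟩
  obtain ⟨R, hR⟩ := hur ((List.range (w.length + 1)).map fun j => u (n + j)) ⟨n, by simp⟩
  refine ⟨R + w.length, fun m ⟨i, hi⟩ => ?_⟩
  by_contra! hm
  obtain ⟨j, hij, hjR, hj⟩ := hR i
  simp only [List.length_map, List.length_range] at hj
  have key : ∀ t < w.length + 1, u (n + t) = u (j + t) := by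
    intro t ht
    exact List.map_inj_left.mp hj t (List.mem_range.mpr ht)
  obtain ⟨k, rfl⟩ := Nat.exists_eq_add_of_le hij
  have hper := periodic_of_powPrefix hi (k := k) (by omega)
  apply hn
  rw [key _ (by omega), ← Nat.add_zero n, key 0 (by omega), Nat.add_zero, add_assoc, hper]

/-- in a uniformly recurrent word over a finite alphabet which is not
eventually periodic, every nonempty factor has finite index. -/
theorem factorIndex_lt_top_of_uniformlyRecurrent
    {α : Type*} [Fintype α] [Inhabited α] (u : ℕ → α)
    (hur : UniformlyRecurrent u) (hnp : ¬ EventuallyPeriodic u)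
    (w : List α) (hw : w ≠ []) (hfac : IsFactor w u) :
    factorIndex u w < ⊤ := by
  obtain ⟨M, hM⟩ := exists_bound_powPrefix hur hnp hw
  refine lt_of_le_of_lt (sSup_le ?_) (EReal.coe_lt_top ((M : ℝ) / (w.length : ℝ)))
  rintro x ⟨m, -, hm, rfl⟩
  have hmM := hM m hm
  exact EReal.coe_le_coe_iff.mpr (by gcongr)
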